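/- Let p ∈ (0,1), n ≥ 4 an integer, and ε a real with 1/√n ≤ ε ≤ min{p/2, 1-p}. Then P[B(n,p) ≤ (p - ε)n] ≥ (1/(2√2))·exp(-nε²/(2p(1-p)) - 3√(nε²)/(2p(1-p)) - 4nε³/(p²(1-p)²)), where B(n,p) denotes a binomial random variable with parameters n and p. -/

import Mathlib

/-- `P[B(n,p) ≤ (p-ε)n]`, the lower tail of a binomial random variable with
parameters `n` and `p`, written as an explicit sum. -/
noncomputable def binomialLowerTail (n : ℕ) (p t : ℝ) : ℝ :=
  ∑ i ∈ Finset.range (n + 1),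
    if (i : ℝ) ≤ t then (n.choose i : ℝ) * p ^ i * (1 - p) ^ (n - i) else 0

/-!
Under the parameter `i / n` the value `i` is the mean, so by Stirling's formula it has probability
at least a constant times `1 / √n`; changing the parameter to `p` costs exactly the factor
`exp (-n D)`, where `D` is the relative entropy of the Bernoulli laws of parameters `i / n` and `p`.
With `i / n = p - h`, Taylor expansion gives `D ≤ h² / (2p(1-p)) + h³ / (2p²)`. Summing over the
last `⌊√n⌋` integers below `(p - ε)n`, where `ε ≤ h ≤ ε + 1/√n ≤ 2ε`, cancels the factor `1 / √n`.
-/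

open Real

section Stirling

lemma factorial_le_exp_one_mul_sqrt {k : ℕ} (hk : k ≠ 0) :
    (k.factorial : ℝ) ≤ exp 1 * √k * (k / exp 1) ^ k := by
  obtain ⟨m, rfl⟩ := Nat.exists_eq_succ_of_ne_zero hk
  have stirlingSeq_le : Stirling.stirlingSeq m.succ ≤ exp 1 / √2 := by
    simpa only [Function.comp, Nat.succ_eq_add_one, Nat.zero_add, Stirling.stirlingSeq_one]
      using Stirling.stirlingSeq'_antitone (Nat.zero_le m)
  rw [Stirling.stirlingSeq, div_le_iff₀ (by positivity), sqrt_mul zero_le_two] at stirlingSeq_le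
  calc (m.succ.factorial : ℝ)
      ≤ exp 1 / √2 * (√2 * √(m.succ : ℝ) * (m.succ / exp 1) ^ m.succ) := stirlingSeq_le
    _ = exp 1 * √(m.succ : ℝ) * (m.succ / exp 1) ^ m.succ := by field_simp

lemma two_mul_sqrt_mul_sqrt_le_add {x y : ℝ} (hx : 0 ≤ x) (hy : 0 ≤ y) :
    2 * (√x * √y) ≤ x + y := by
  linarith [two_mul_le_add_sq √x √y, sq_sqrt hx, sq_sqrt hy]

lemma le_choose_add_mul_pow_mul_pow {i j : ℕ} (hi : i ≠ 0) (hj : j ≠ 0) :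
    2 * √(2 * π) / (exp 1 ^ 2 * √(i + j : ℝ)) ≤
      (i + j).choose i * (i / (i + j) : ℝ) ^ i * (j / (i + j) : ℝ) ^ j := by
  have hi' : (0 : ℝ) < i := by positivity
  have hj' : (0 : ℝ) < j := by positivity
  rw [Nat.cast_add_choose, div_mul_eq_mul_div, div_mul_eq_mul_div, le_div_iff₀ (by positivity)]
  set N : ℝ := i + j with hN
  have hN' : 0 < N := by positivity
  calc 2 * √(2 * π) / (exp 1 ^ 2 * √N) * (i.factorial * j.factorial)
      ≤ 2 * √(2 * π) / (exp 1 ^ 2 * √N) *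
          ((exp 1 * √i * (i / exp 1) ^ i) * (exp 1 * √j * (j / exp 1) ^ j)) := by
        gcongr
        · exact factorial_le_exp_one_mul_sqrt hi
        · exact factorial_le_exp_one_mul_sqrt hj
    _ = √(2 * π) * (2 * (√i * √j)) / √N * (N / exp 1) ^ (i + j) * (i / N) ^ i * (j / N) ^ j := by
        rw [pow_add]
        simp only [div_pow]
        field_simp
    _ ≤ √(2 * π) * N / √N * (N / exp 1) ^ (i + j) * (i / N) ^ i * (j / N) ^ j := by
        gcongr
        exact two_mul_sqrt_mul_sqrt_le_add hi'.le hj'.le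
    _ = √(2 * π * N) * (N / exp 1) ^ (i + j) * (i / N) ^ i * (j / N) ^ j := by
        rw [mul_div_assoc, div_sqrt, sqrt_mul (by positivity) N]
    _ ≤ (i + j).factorial * (i / N) ^ i * (j / N) ^ j := by
        gcongr
        simpa only [hN, Nat.cast_add] using Stirling.le_factorial_stirling (i + j)

end Stirling

section RelativeEntropy

/-- The relative entropy (Kullback–Leibler divergence) of the Bernoulli law of parameter `a` with
respect to the one of parameter `p`, meaningful for `0 ≤ a ≤ 1` and `0 < p < 1`. -/
noncomputable def bernoulliKL (a p : ℝ) : ℝ :=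
  a * log (a / p) + (1 - a) * log ((1 - a) / (1 - p))

lemma log_one_sub_le {u : ℝ} (hu0 : 0 ≤ u) (hu1 : u < 1) : log (1 - u) ≤ -u - u ^ 2 / 2 := by
  have partial_sum_le := sum_le_hasSum (Finset.range 2) (fun i _ ↦ by positivity)
    (hasSum_pow_div_log_of_abs_lt_one (by rwa [abs_of_nonneg hu0]))
  norm_num [Finset.sum_range_succ] at partial_sum_le
  linarith

-- With `x = log (1 + v)`, this is the inequality `x ≤ sinh x`.
lemma one_add_mul_log_one_add_le {v : ℝ} (hv : 0 ≤ v) :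
    (1 + v) * log (1 + v) ≤ v + v ^ 2 / 2 := by
  have log_le := self_le_sinh_iff.2 (log_nonneg (le_add_of_nonneg_right hv))
  rw [sinh_log (by positivity)] at log_le
  calc (1 + v) * log (1 + v) ≤ (1 + v) * (((1 + v) - (1 + v)⁻¹) / 2) := by gcongr
    _ = v + v ^ 2 / 2 := by field_simp; ring

variable {p h : ℝ}

lemma bernoulliKL_sub_le (hp1 : p < 1) (hh0 : 0 ≤ h) (hhp : h < p) :
    bernoulliKL (p - h) p ≤ h ^ 2 / (2 * p * (1 - p)) + h ^ 3 / (2 * p ^ 2) := by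
  have hp0 : 0 < p := hh0.trans_lt hhp
  have hq : 0 < 1 - p := sub_pos.2 hp1
  have success_ratio : (p - h) / p = 1 - h / p := by field_simp
  have failure_ratio : (1 - (p - h)) / (1 - p) = 1 + h / (1 - p) := by field_simp; ring
  have failure_eq : 1 - (p - h) = (1 - p) * (1 + h / (1 - p)) := by field_simp; ring
  calc bernoulliKL (p - h) p
      = (p - h) * log (1 - h / p) +
          (1 - p) * ((1 + h / (1 - p)) * log (1 + h / (1 - p))) := by
        rw [bernoulliKL, success_ratio, failure_ratio, failure_eq, mul_assoc]
    _ ≤ (p - h) * (-(h / p) - (h / p) ^ 2 / 2) +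
          (1 - p) * (h / (1 - p) + (h / (1 - p)) ^ 2 / 2) := by
        gcongr
        · exact log_one_sub_le (by positivity) ((div_lt_one hp0).2 hhp)
        · exact one_add_mul_log_one_add_le (by positivity)
    _ = h ^ 2 / (2 * p * (1 - p)) + h ^ 3 / (2 * p ^ 2) := by field_simp; ring

lemma bernoulliKL_sub_le_of_le_add {ε δ : ℝ} (hp1 : p < 1) (hh0 : 0 ≤ h) (hhp : h < p)
    (hδ0 : 0 ≤ δ) (hδε : δ ≤ ε) (hh : h ≤ ε + δ) :
    bernoulliKL (p - h) p ≤
      (ε ^ 2 + 3 * ε * δ) / (2 * p * (1 - p)) + 4 * ε ^ 3 / p ^ 2 := by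
  have hp0 : 0 < p := hh0.trans_lt hhp
  have hq : 0 < 1 - p := sub_pos.2 hp1
  have h_sq_le : h ^ 2 ≤ ε ^ 2 + 3 * ε * δ := by
    calc h ^ 2 ≤ (ε + δ) ^ 2 := by gcongr
      _ ≤ ε ^ 2 + 3 * ε * δ := by linarith [mul_le_mul_of_nonneg_right hδε hδ0]
  have h_le : h ≤ 2 * ε := by linarith
  calc bernoulliKL (p - h) p ≤ h ^ 2 / (2 * p * (1 - p)) + h ^ 3 / (2 * p ^ 2) :=
        bernoulliKL_sub_le hp1 hh0 hhp
    _ ≤ (ε ^ 2 + 3 * ε * δ) / (2 * p * (1 - p)) + (2 * ε) ^ 3 / (2 * p ^ 2) := by gcongr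
    _ = (ε ^ 2 + 3 * ε * δ) / (2 * p * (1 - p)) + 4 * ε ^ 3 / p ^ 2 := by field_simp; ring

end RelativeEntropy

section Binomial

/-- The probability `P[B(n,p) = i]` that a binomial random variable takes the value `i`. As in
`binomialLowerTail`, the parameter `p` is an arbitrary real number. -/
noncomputable def binomialMass (n : ℕ) (p : ℝ) (i : ℕ) : ℝ :=
  n.choose i * p ^ i * (1 - p) ^ (n - i)

variable {n i : ℕ} {p : ℝ}

lemma binomialMass_nonneg (hp0 : 0 ≤ p) (hp1 : p ≤ 1) : 0 ≤ binomialMass n p i := by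
  have : 0 ≤ 1 - p := sub_nonneg.2 hp1
  unfold binomialMass
  positivity

lemma le_binomialMass_div (hi : i ≠ 0) (hin : i < n) :
    2 * √(2 * π) / (exp 1 ^ 2 * √n) ≤ binomialMass n (i / n) i := by
  obtain ⟨j, rfl⟩ := Nat.exists_eq_add_of_le hin.le
  have one_sub : 1 - (i / (i + j) : ℝ) = j / (i + j) := by
    have : (0 : ℝ) < i := by positivity
    field_simp
    ring
  rw [binomialMass, Nat.add_sub_cancel_left, Nat.cast_add, one_sub]
  exact le_choose_add_mul_pow_mul_pow hi (by lia)

lemma pow_mul_exp_neg_mul_log_div {x y : ℝ} (hx : 0 < x) (hy : 0 < y) (k : ℕ) :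
    x ^ k * exp (-(k * log (x / y))) = y ^ k := by
  rw [← mul_neg, exp_nat_mul, ← log_inv, exp_log (by positivity), ← mul_pow, inv_div,
    mul_div_cancel₀ _ hx.ne']

lemma binomialMass_div_mul_exp_neg_bernoulliKL (hp0 : 0 < p) (hp1 : p < 1) (hi : i ≠ 0)
    (hin : i < n) :
    binomialMass n (i / n) i * exp (-(n * bernoulliKL (i / n) p)) = binomialMass n p i := by
  have hn : (0 : ℝ) < n := Nat.cast_pos.2 (i.zero_le.trans_lt hin)
  have freq_pos : 0 < (i / n : ℝ) := by positivity
  have freq_lt_one : (i / n : ℝ) < 1 := (div_lt_one hn).2 (Nat.cast_lt.2 hin)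
  have exponent_eq : -(n * bernoulliKL (i / n) p) =
      -(i * log (i / n / p)) + -((n - i : ℕ) * log ((1 - i / n) / (1 - p))) := by
    rw [bernoulliKL, Nat.cast_sub hin.le]
    field_simp
    ring
  rw [exponent_eq, exp_add, binomialMass, binomialMass, mul_mul_mul_comm,
    mul_assoc (n.choose i : ℝ), pow_mul_exp_neg_mul_log_div freq_pos hp0,
    pow_mul_exp_neg_mul_log_div (sub_pos.2 freq_lt_one) (sub_pos.2 hp1)]

lemma mul_exp_neg_bernoulliKL_le_binomialMass (hp0 : 0 < p) (hp1 : p < 1) (hi : i ≠ 0)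
    (hin : i < n) :
    2 * √(2 * π) / (exp 1 ^ 2 * √n) * exp (-(n * bernoulliKL (i / n) p)) ≤
      binomialMass n p i := by
  rw [← binomialMass_div_mul_exp_neg_bernoulliKL hp0 hp1 hi hin]
  gcongr
  exact le_binomialMass_div hi hin

lemma sum_binomialMass_le_binomialLowerTail (hp0 : 0 ≤ p) (hp1 : p ≤ 1) {t : ℝ} {S : Finset ℕ}
    (hSn : ∀ i ∈ S, i ≤ n) (hSt : ∀ i ∈ S, (i : ℝ) ≤ t) :
    ∑ i ∈ S, binomialMass n p i ≤ binomialLowerTail n p t := by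
  rw [binomialLowerTail, ← Finset.sum_filter]
  refine Finset.sum_le_sum_of_subset_of_nonneg (fun i hi ↦ ?_)
    fun i _ _ ↦ binomialMass_nonneg hp0 hp1
  exact Finset.mem_filter.2 ⟨Finset.mem_range_succ_iff.2 (hSn i hi), hSt i hi⟩

lemma floor_mul_le_binomialLowerTail (hp0 : 0 ≤ p) (hp1 : p ≤ 1) {w t b : ℝ} (hw : 0 ≤ w)
    (hwt : w ≤ t) (htn : t ≤ n)
    (hb : ∀ i : ℕ, t - w < i → (i : ℝ) ≤ t → b ≤ binomialMass n p i) :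
    ⌊w⌋₊ * b ≤ binomialLowerTail n p t := by
  have le_t {i : ℕ} (hi : i ≤ ⌊t⌋₊) : (i : ℝ) ≤ t := (Nat.le_floor_iff (hw.trans hwt)).1 hi
  set S := Finset.Ioc (⌊t⌋₊ - ⌊w⌋₊) ⌊t⌋₊ with hS
  have card_S : S.card = ⌊w⌋₊ := by
    rw [hS, Nat.card_Ioc, Nat.sub_sub_self (Nat.floor_mono hwt)]
  calc ⌊w⌋₊ * b = S.card • b := by rw [card_S, nsmul_eq_mul]
    _ ≤ ∑ i ∈ S, binomialMass n p i := by
        refine Finset.card_nsmul_le_sum _ _ _ fun i hi ↦ ?_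
        obtain ⟨lt_i, i_le⟩ := Finset.mem_Ioc.1 hi
        refine hb i ?_ (le_t i_le)
        have floor_lt : (⌊t⌋₊ + 1 : ℝ) ≤ i + ⌊w⌋₊ := by
          exact_mod_cast (by lia : ⌊t⌋₊ + 1 ≤ i + ⌊w⌋₊)
        linarith [Nat.lt_floor_add_one t, Nat.floor_le hw]
    _ ≤ binomialLowerTail n p t :=
        sum_binomialMass_le_binomialLowerTail hp0 hp1
          (fun i hi ↦ by exact_mod_cast (le_t (Finset.mem_Ioc.1 hi).2).trans htn)
          fun i hi ↦ le_t (Finset.mem_Ioc.1 hi).2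

variable {ε δ : ℝ}

lemma mul_exp_le_binomialMass_of_window (hp1 : p < 1) (hδ0 : 0 ≤ δ) (hδε : δ ≤ ε)
    (hεδ : ε + δ ≤ p) (hi_gt : (p - (ε + δ)) * n < i) (hi_le : i ≤ (p - ε) * n) :
    2 * √(2 * π) / (exp 1 ^ 2 * √n) *
        exp (-(n * ((ε ^ 2 + 3 * ε * δ) / (2 * p * (1 - p)) + 4 * ε ^ 3 / p ^ 2))) ≤
      binomialMass n p i := by
  have hε0 : 0 ≤ ε := hδ0.trans hδε
  have hi : (0 : ℝ) < i := (mul_nonneg (sub_nonneg.2 hεδ) n.cast_nonneg).trans_lt hi_gt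
  have hn : (0 : ℝ) < n := by
    refine n.cast_nonneg.lt_of_ne fun hn ↦ ?_
    rw [← hn, mul_zero] at hi_le
    linarith
  have freq_gt : p - (ε + δ) < i / n := (lt_div_iff₀ hn).2 hi_gt
  have freq_le : i / n ≤ p - ε := (div_le_iff₀ hn).2 hi_le
  have : 0 < (i / n : ℝ) := by positivity
  have hin : i < n := by exact_mod_cast (div_lt_one hn).1 (by linarith : (i / n : ℝ) < 1)
  have kl_le := bernoulliKL_sub_le_of_le_add (h := p - i / n) hp1 (by linarith) (by linarith)
    hδ0 hδε (by linarith)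
  rw [sub_sub_cancel] at kl_le
  refine le_trans ?_ (mul_exp_neg_bernoulliKL_le_binomialMass (by linarith) hp1
    (Nat.cast_pos.1 hi).ne' hin)
  gcongr

lemma floor_mul_exp_le_binomialLowerTail (hp1 : p < 1) (hδ0 : 0 ≤ δ) (hδε : δ ≤ ε)
    (hεδ : ε + δ ≤ p) :
    ⌊δ * n⌋₊ * (2 * √(2 * π) / (exp 1 ^ 2 * √n) *
        exp (-(n * ((ε ^ 2 + 3 * ε * δ) / (2 * p * (1 - p)) + 4 * ε ^ 3 / p ^ 2)))) ≤
      binomialLowerTail n p ((p - ε) * n) := by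
  refine floor_mul_le_binomialLowerTail (by linarith) hp1.le (by positivity) ?_ ?_
    fun i hi_gt hi_le ↦ mul_exp_le_binomialMass_of_window hp1 hδ0 hδε hεδ (by linarith) hi_le
  · gcongr
    linarith
  · exact mul_le_of_le_one_left n.cast_nonneg (by linarith)

end Binomial

lemma two_thirds_mul_le_floor {x : ℝ} (hx : 2 ≤ x) : 2 / 3 * x ≤ ⌊x⌋₊ := by
  have two_le_floor : (2 : ℝ) ≤ ⌊x⌋₊ := by exact_mod_cast Nat.le_floor hx
  linarith [Nat.lt_floor_add_one x]

lemma one_div_two_mul_sqrt_two_le :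
    1 / (2 * √2) ≤ 2 / 3 * (2 * √(2 * π) / exp 1 ^ 2) := by
  have exp_sq_le : exp 1 ^ 2 ≤ 8 :=
    (pow_le_pow_left₀ (exp_pos 1).le exp_one_lt_d9.le 2).trans (by norm_num)
  have le_sqrt_pi : 3 / 2 ≤ √π := le_sqrt_of_sq_le (by linarith [pi_gt_three])
  have sqrt_two_sq : √(2 : ℝ) ^ 2 = 2 := sq_sqrt zero_le_two
  rw [sqrt_mul zero_le_two]
  calc 1 / (2 * √2) = 2 / 3 * (2 * (√2 * (3 / 2)) / 8) := by
        field_simp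
        linarith
    _ ≤ 2 / 3 * (2 * (√2 * √π) / exp 1 ^ 2) := by gcongr

lemma one_div_two_mul_sqrt_two_le_floor_mul {s : ℝ} (hs : 2 ≤ s) :
    1 / (2 * √2) ≤ ⌊s⌋₊ * (2 * √(2 * π) / (exp 1 ^ 2 * s)) := by
  calc 1 / (2 * √2) ≤ 2 / 3 * (2 * √(2 * π) / exp 1 ^ 2) := one_div_two_mul_sqrt_two_le
    _ = 2 / 3 * s * (2 * √(2 * π) / (exp 1 ^ 2 * s)) := by field_simp
    _ ≤ ⌊s⌋₊ * (2 * √(2 * π) / (exp 1 ^ 2 * s)) := by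
        gcongr
        exact two_thirds_mul_le_floor hs

theorem stmt_16_general {p ε : ℝ} {n : ℕ} (hp1 : p < 1) (hn : 0 < n) (hε : 1 / √n ≤ ε)
    (hεp : ε + 1 / √n ≤ p) :
    1 / (2 * √2) * exp (-(n * ε ^ 2) / (2 * p * (1 - p)) -
        3 * √(n * ε ^ 2) / (2 * p * (1 - p)) - 4 * n * ε ^ 3 / p ^ 2) ≤
      binomialLowerTail n p ((p - ε) * n) := by
  have hs : 0 < √(n : ℝ) := sqrt_pos.2 (Nat.cast_pos.2 hn)
  have hε0 : 0 ≤ ε := le_trans (by positivity) hε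
  have two_le_sqrt : 2 ≤ √(n : ℝ) := by
    have : 2 / √(n : ℝ) ≤ 1 := by linarith [add_div 1 1 √(n : ℝ)]
    exact (div_le_one hs).1 this
  have inv_sqrt_mul : 1 / √(n : ℝ) * n = √n := by rw [one_div_mul_eq_div, div_sqrt]
  have exponent_eq : -(n * ε ^ 2) / (2 * p * (1 - p)) - 3 * √(n * ε ^ 2) / (2 * p * (1 - p)) -
        4 * n * ε ^ 3 / p ^ 2 =
      -(n * ((ε ^ 2 + 3 * ε * (1 / √n)) / (2 * p * (1 - p)) + 4 * ε ^ 3 / p ^ 2)) := by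
    rw [sqrt_mul n.cast_nonneg, sqrt_sq hε0]
    linear_combination (3 * ε / (2 * p * (1 - p))) * inv_sqrt_mul
  have tail_ge := floor_mul_exp_le_binomialLowerTail (n := n) hp1 (by positivity) hε hεp
  rw [inv_sqrt_mul, ← mul_assoc, ← exponent_eq] at tail_ge
  refine le_trans ?_ tail_ge
  gcongr
  exact one_div_two_mul_sqrt_two_le_floor_mul two_le_sqrt

lemma div_sq_le_div_sq_mul_one_sub_sq {a p : ℝ} (ha : 0 ≤ a) (hp0 : 0 < p) (hp1 : p < 1) :
    a / p ^ 2 ≤ a / (p ^ 2 * (1 - p) ^ 2) := by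
  have hq : 0 < 1 - p := sub_pos.2 hp1
  gcongr
  exact mul_le_of_le_one_right (by positivity) (pow_le_one₀ hq.le (by linarith))

theorem stmt_16 (p : ℝ) (hp0 : 0 < p) (hp1 : p < 1) (n : ℕ) (hn : 4 ≤ n)
    (ε : ℝ) (hε1 : 1 / Real.sqrt n ≤ ε) (hε2 : ε ≤ min (p / 2) (1 - p)) :
    binomialLowerTail n p ((p - ε) * n) ≥
      1 / (2 * Real.sqrt 2) *
        Real.exp (-(n * ε ^ 2) / (2 * p * (1 - p)) -
          3 * Real.sqrt (n * ε ^ 2) / (2 * p * (1 - p)) -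
          4 * n * ε ^ 3 / (p ^ 2 * (1 - p) ^ 2)) := by
  have hε0 : 0 ≤ ε := le_trans (by positivity) hε1
  refine le_trans ?_ (stmt_16_general hp1 (by lia) hε1 (by linarith [le_min_iff.1 hε2]))
  gcongr _ * exp (_ - ?_)
  exact div_sq_le_div_sq_mul_one_sub_sq (by positivity) hp0 hp1
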